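/- Let ψ be an n-qubit stabilizer state whose stabilizer group 𝒮(ψ) contains an element that anticommutes with Z_1. Then T_1ψ is not a stabilizer state. -/

import Mathlib

noncomputable section
namespace PaperFormal

open Matrix

/-- The space of `n`-qubit operators: matrices indexed by computational basis states. -/
abbrev QMat (n : ℕ) := Matrix (Fin n → Fin 2) (Fin n → Fin 2) ℂ

/-- The space of `n`-qubit state vectors. -/
abbrev QVec (n : ℕ) := (Fin n → Fin 2) → ℂ

def σI : Matrix (Fin 2) (Fin 2) ℂ := 1
def σX : Matrix (Fin 2) (Fin 2) ℂ := !![0, 1; 1, 0]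
def σY : Matrix (Fin 2) (Fin 2) ℂ := !![0, -Complex.I; Complex.I, 0]
def σZ : Matrix (Fin 2) (Fin 2) ℂ := !![1, 0; 0, -1]

def IsPauliFactor (m : Matrix (Fin 2) (Fin 2) ℂ) : Prop :=
  m = σI ∨ m = σX ∨ m = σY ∨ m = σZ

/-- Kronecker product over `n` qubits of single-qubit matrices. -/
def kron {n : ℕ} (σ : Fin n → Matrix (Fin 2) (Fin 2) ℂ) : QMat n :=
  fun v w => ∏ j, σ j (v j) (w j)

/-- Membership in the `n`-qubit Pauli group `𝒫_n`:
`M = i^k σ_1 ⊗ ⋯ ⊗ σ_n` with each `σ_j ∈ {I, X, Y, Z}`. -/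
def IsPauli {n : ℕ} (M : QMat n) : Prop :=
  ∃ (k : Fin 4) (σ : Fin n → Matrix (Fin 2) (Fin 2) ℂ),
    (∀ j, IsPauliFactor (σ j)) ∧ M = Complex.I ^ (k : ℕ) • kron σ

/-- A Pauli operator supported on the set `A` of qubits (identity factors outside `A`). -/
def PauliSupportedOn {n : ℕ} (M : QMat n) (A : Set (Fin n)) : Prop :=
  ∃ (k : Fin 4) (σ : Fin n → Matrix (Fin 2) (Fin 2) ℂ),
    (∀ j, IsPauliFactor (σ j)) ∧ (∀ j, j ∉ A → σ j = σI) ∧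
    M = Complex.I ^ (k : ℕ) • kron σ

/-- The Pauli `M` has identity (`j`-th Kronecker factor proportional to identity) at qubit `j`. -/
def PauliTrivialAt {n : ℕ} (M : QMat n) (j : Fin n) : Prop :=
  PauliSupportedOn M {i | i ≠ j}

/-- The single-qubit operator `m` placed at qubit `j` (identity elsewhere). -/
def opAt {n : ℕ} (j : Fin n) (m : Matrix (Fin 2) (Fin 2) ℂ) : QMat n :=
  kron (fun i => if i = j then m else σI)

/-- Inner product `⟨φ, ψ⟩` (antilinear in the first argument). -/
def innerC {n : ℕ} (φ ψ : QVec n) : ℂ := ∑ v, (starRingEnd ℂ) (φ v) * ψ v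

/-- Squared norm `‖ψ‖²`. -/
def nrmSq {n : ℕ} (ψ : QVec n) : ℝ := ∑ v, Complex.normSq (ψ v)

/-- The stabilizer group `𝒮(ψ) = {P ∈ 𝒫_n : Pψ = ψ}`. -/
def stabGroup {n : ℕ} (ψ : QVec n) : Set (QMat n) :=
  {P | IsPauli P ∧ P.mulVec ψ = ψ}

/-- An `n`-qubit pure stabilizer state: a unit vector whose stabilizer group has `2^n` elements. -/
def IsStabState {n : ℕ} (ψ : QVec n) : Prop :=
  nrmSq ψ = 1 ∧ (stabGroup ψ).ncard = 2 ^ n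

/-- The product `∏ i, g i ^ α i` (in the fixed order of indices). -/
def prodPow {n m : ℕ} (g : Fin m → QMat n) (α : Fin m → ZMod 2) : QMat n :=
  (List.ofFn fun i => g i ^ (α i).val).prod

/-- `g` is an independent generating set of `𝒮(ψ)`: the map
`(α_i) ↦ ∏ g_i^{α_i}` is a bijection from `(ℤ/2)^m` onto `𝒮(ψ)`. -/
def IsIndepGenSet {n m : ℕ} (ψ : QVec n) (g : Fin m → QMat n) : Prop :=
  (∀ i, g i ∈ stabGroup ψ) ∧ Function.Injective (prodPow g) ∧
    Set.range (prodPow g) = stabGroup ψ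

/-- The `T` gate `diag(1, e^{iπ/4})`. -/
def Tgate : Matrix (Fin 2) (Fin 2) ℂ :=
  !![1, 0; 0, Complex.exp (Real.pi * Complex.I / 4)]

/-!
Write `D_f` for the operator `diag(f)` on qubit `j`, and `f ∘ rev` for `f` with its two values
swapped. As `D_f` is a combination of `1` and `Z_j`, it commutes with every Pauli commuting with
`Z_j`, while `P D_f = D_{f ∘ rev} P` if `P` anticommutes with `Z_j`. For invertible `D_f`, a Pauli
of the first kind stabilizes `D_f ψ` iff it stabilizes `ψ`. If Paulis `P`, `Q` of the second kind
stabilized `D_f ψ` and `ψ` respectively, then `Q P D_f ψ = Q D_f ψ = D_{f ∘ rev} ψ`. Since `Q P`,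
`D_f` and `D_{f ∘ rev}` commute pairwise and `(Q P) ^ 4 = 1`, taking fourth powers gives
`D_f ^ 4 ψ = D_{f ∘ rev} ^ 4 ψ`, which forces `ψ = 0` as soon as `f 0 ^ 4 ≠ f 1 ^ 4`. Hence `D_f`
creates no new stabilizers and destroys at least the one anticommuting with `Z_j`.
-/

lemma pow_mulVec_eq_of_commute {ι R : Type*} [Fintype ι] [DecidableEq ι] [Semiring R]
    {A B : Matrix ι ι R} {x : ι → R} (hAB : Commute A B) (h : A *ᵥ x = B *ᵥ x) (m : ℕ) :
    A ^ m *ᵥ x = B ^ m *ᵥ x := by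
  induction m with
  | zero => rw [pow_zero, pow_zero]
  | succ m ih =>
    calc A ^ (m + 1) *ᵥ x = (A * B ^ m) *ᵥ x := by
          rw [pow_succ', ← mulVec_mulVec, ih, mulVec_mulVec]
      _ = B ^ (m + 1) *ᵥ x := by
          rw [(hAB.pow_right m).eq, ← mulVec_mulVec, h, mulVec_mulVec, pow_succ]

section Kronecker

variable {n : ℕ}

lemma kron_mul (σ τ : Fin n → Matrix (Fin 2) (Fin 2) ℂ) :
    kron (σ * τ) = kron σ * kron τ := by
  ext v w
  simp only [kron, Pi.mul_apply, mul_apply, ← Finset.prod_mul_distrib]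
  exact Fintype.prod_sum fun j x => σ j (v j) x * τ j x (w j)

lemma kron_diagonal (d : Fin n → Fin 2 → ℂ) :
    kron (fun j => diagonal (d j)) = diagonal fun v => ∏ j, d j (v j) := by
  ext v w
  by_cases hvw : v = w
  · simp [kron, hvw]
  · obtain ⟨j, hj⟩ := Function.ne_iff.mp hvw
    rw [diagonal_apply_ne _ hvw]
    exact Finset.prod_eq_zero (Finset.mem_univ j) (diagonal_apply_ne _ hj)

lemma kron_one : kron (1 : Fin n → Matrix (Fin 2) (Fin 2) ℂ) = 1 := by
  calc kron 1 = kron fun _ : Fin n => diagonal fun _ => 1 := by rw [diagonal_one]; rfl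
    _ = 1 := by rw [kron_diagonal]; simp only [Finset.prod_const_one, diagonal_one]

/-- The Kronecker product `kron` as a monoid homomorphism from families of single-qubit matrices,
multiplied qubit by qubit, to `n`-qubit operators. -/
def kronHom (n : ℕ) : (Fin n → Matrix (Fin 2) (Fin 2) ℂ) →* QMat n where
  toFun := kron
  map_one' := kron_one
  map_mul' := kron_mul

lemma opAt_eq_kronHom_mulSingle (j : Fin n) (m : Matrix (Fin 2) (Fin 2) ℂ) :
    opAt j m = kronHom n (Pi.mulSingle j m) := by
  refine congrArg kron (funext fun i => ?_)
  rw [Pi.mulSingle_apply, σI]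

lemma semiconjBy_kron_opAt {σ : Fin n → Matrix (Fin 2) (Fin 2) ℂ} {j : Fin n}
    {a b : Matrix (Fin 2) (Fin 2) ℂ} (h : SemiconjBy (σ j) a b) :
    SemiconjBy (kron σ) (opAt j a) (opAt j b) := by
  rw [opAt_eq_kronHom_mulSingle, opAt_eq_kronHom_mulSingle]
  refine SemiconjBy.map (Pi.semiconjBy_iff.mpr fun i => ?_) (kronHom n)
  obtain rfl | hij := eq_or_ne i j
  · simpa using h
  · simp [hij]

lemma opAt_neg (j : Fin n) (m : Matrix (Fin 2) (Fin 2) ℂ) : opAt j (-m) = -opAt j m := by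
  ext v w
  rw [neg_apply]
  simp only [opAt, kron]
  rw [← Finset.mul_prod_erase _ _ (Finset.mem_univ j),
    ← Finset.mul_prod_erase _ _ (Finset.mem_univ j), if_pos rfl, if_pos rfl, neg_apply, neg_mul]
  refine congrArg (fun x => -(m (v j) (w j) * x)) (Finset.prod_congr rfl fun i hi => ?_)
  rw [if_neg (Finset.ne_of_mem_erase hi), if_neg (Finset.ne_of_mem_erase hi)]

lemma opAt_diagonal (j : Fin n) (f : Fin 2 → ℂ) :
    opAt j (diagonal f) = diagonal fun v => f (v j) := by
  have hfactor : (fun i => if i = j then diagonal f else σI) =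
      fun i => diagonal (if i = j then f else 1) := by
    ext1 i
    split_ifs
    · rfl
    · exact diagonal_one.symm
  rw [opAt, hfactor, kron_diagonal]
  simp [ite_apply]

end Kronecker

section Pauli

variable {n : ℕ}

lemma IsPauliFactor.mul_pow_four {a b : Matrix (Fin 2) (Fin 2) ℂ}
    (ha : IsPauliFactor a) (hb : IsPauliFactor b) : (a * b) ^ 4 = 1 := by
  rw [show 4 = 2 * 2 from rfl, pow_mul, pow_two (a * b), pow_two]
  rcases ha with rfl | rfl | rfl | rfl <;> rcases hb with rfl | rfl | rfl | rfl <;>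
    simp [σI, σX, σY, σZ, one_fin_two]

lemma IsPauli.mul_pow_four {P Q : QMat n} (hP : IsPauli P) (hQ : IsPauli Q) :
    (P * Q) ^ 4 = 1 := by
  obtain ⟨k, σ, hσ, rfl⟩ := hP
  obtain ⟨l, τ, hτ, rfl⟩ := hQ
  have hphase (m : ℕ) : (Complex.I ^ m) ^ 4 = 1 := by
    rw [pow_right_comm, Complex.I_pow_four, one_pow]
  have hkron : (kron σ * kron τ) ^ 4 = 1 := by
    have hfactors : (σ * τ) ^ 4 = 1 := funext fun j => (hσ j).mul_pow_four (hτ j)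
    change (kronHom n σ * kronHom n τ) ^ 4 = 1
    rw [← map_mul, ← map_pow, hfactors, map_one]
  rw [smul_mul_smul_comm, smul_pow, mul_pow, hphase, hphase, hkron, one_mul, one_smul]

lemma IsPauliFactor.commute_or_anticommute_σZ {a : Matrix (Fin 2) (Fin 2) ℂ}
    (ha : IsPauliFactor a) : Commute a σZ ∨ SemiconjBy a σZ (-σZ) := by
  rcases ha with rfl | rfl | rfl | rfl
  · exact .inl (.one_left _)
  · exact .inr (by simp [SemiconjBy, σX, σZ])
  · exact .inr (by simp [SemiconjBy, σY, σZ])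
  · exact .inl (.refl _)

lemma IsPauli.commute_or_anticommute_opAt_σZ {P : QMat n} (hP : IsPauli P) (j : Fin n) :
    Commute P (opAt j σZ) ∨ SemiconjBy P (opAt j σZ) (-opAt j σZ) := by
  obtain ⟨k, σ, hσ, rfl⟩ := hP
  rw [← opAt_neg]
  exact (hσ j).commute_or_anticommute_σZ.imp
    (fun h => (semiconjBy_kron_opAt h).smul_left _) (fun h => (semiconjBy_kron_opAt h).smul_left _)

end Pauli

section DiagonalGate

variable {n : ℕ} {j : Fin n} {P Q : QMat n} {ψ : QVec n} {f : Fin 2 → ℂ}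

lemma opAt_diagonal_eq_smul_one_add_smul_opAt_σZ (j : Fin n) (f : Fin 2 → ℂ) :
    opAt j (diagonal f) =
      ((f 0 + f 1) / 2) • (1 : QMat n) + ((f 0 - f 1) / 2) • opAt j σZ := by
  have hσZ : σZ = diagonal ![1, -1] := by
    ext x y
    fin_cases x <;> fin_cases y <;> simp [σZ]
  have hf (x : Fin 2) : f x = (f 0 + f 1) / 2 + (f 0 - f 1) / 2 * ![1, -1] x := by
    fin_cases x <;> simp <;> ring
  rw [hσZ, opAt_diagonal, opAt_diagonal, ← diagonal_one, ← diagonal_smul, ← diagonal_smul,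
    diagonal_add]
  refine congrArg diagonal (funext fun v => ?_)
  simpa using hf (v j)

lemma commute_opAt_diagonal (h : Commute P (opAt j σZ)) (f : Fin 2 → ℂ) :
    Commute P (opAt j (diagonal f)) := by
  rw [opAt_diagonal_eq_smul_one_add_smul_opAt_σZ]
  exact ((Commute.one_right P).smul_right _).add_right (h.smul_right _)

lemma semiconjBy_opAt_diagonal_comp_rev (h : SemiconjBy P (opAt j σZ) (-opAt j σZ))
    (f : Fin 2 → ℂ) :
    SemiconjBy P (opAt j (diagonal f)) (opAt j (diagonal (f ∘ Fin.rev))) := by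
  have hrev : opAt j (diagonal (f ∘ Fin.rev)) =
      ((f 0 + f 1) / 2) • (1 : QMat n) + ((f 0 - f 1) / 2) • -opAt j σZ := by
    rw [opAt_diagonal_eq_smul_one_add_smul_opAt_σZ]
    have hrev0 : Fin.rev (0 : Fin 2) = 1 := rfl
    have hrev1 : Fin.rev (1 : Fin 2) = 0 := rfl
    simp only [Function.comp_apply, hrev0, hrev1]
    module
  rw [hrev, opAt_diagonal_eq_smul_one_add_smul_opAt_σZ]
  exact (SemiconjBy.smul_right (.one_right P) _).add_right (h.smul_right _)

lemma opAt_diagonal_mulVec_injective (hf : ∀ x, f x ≠ 0) :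
    Function.Injective (opAt j (diagonal f)).mulVec := by
  rw [mulVec_injective_iff_isUnit, opAt_diagonal, isUnit_diagonal, Pi.isUnit_iff]
  exact fun v => (hf (v j)).isUnit

lemma opAt_diagonal_pow_four_mulVec_eq
    (hP : P ∈ stabGroup (opAt j (diagonal f) *ᵥ ψ)) (hQ : Q ∈ stabGroup ψ)
    (hPZ : SemiconjBy P (opAt j σZ) (-opAt j σZ)) (hQZ : SemiconjBy Q (opAt j σZ) (-opAt j σZ)) :
    opAt j (diagonal f) ^ 4 *ᵥ ψ = opAt j (diagonal (f ∘ Fin.rev)) ^ 4 *ᵥ ψ := by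
  have hQP : Commute (Q * P) (opAt j σZ) := by
    have hcancel := hQZ.neg_right.mul_left hPZ
    rwa [neg_neg] at hcancel
  set A := opAt j (diagonal f)
  set B := opAt j (diagonal (f ∘ Fin.rev))
  have hAB : Commute A B := by
    simp only [A, B, opAt_diagonal, commute_diagonal]
  have hQPA : (Q * P * A) *ᵥ ψ = B *ᵥ ψ :=
    calc (Q * P * A) *ᵥ ψ = Q *ᵥ (P *ᵥ (A *ᵥ ψ)) := by simp only [mulVec_mulVec, mul_assoc]
      _ = (Q * A) *ᵥ ψ := by rw [hP.2, mulVec_mulVec]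
      _ = (B * Q) *ᵥ ψ := by rw [(semiconjBy_opAt_diagonal_comp_rev hQZ f).eq]
      _ = B *ᵥ ψ := by rw [← mulVec_mulVec, hQ.2]
  have hpow : (Q * P * A) ^ 4 = A ^ 4 := by
    rw [(commute_opAt_diagonal hQP f).mul_pow, hQ.1.mul_pow_four hP.1, one_mul]
  rw [← hpow]
  exact pow_mulVec_eq_of_commute ((commute_opAt_diagonal hQP _).mul_left hAB) hQPA 4

lemma eq_zero_of_opAt_diagonal_pow_mulVec_eq {m : ℕ} (hf : f 0 ^ m ≠ f 1 ^ m)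
    (h : opAt j (diagonal f) ^ m *ᵥ ψ = opAt j (diagonal (f ∘ Fin.rev)) ^ m *ᵥ ψ) : ψ = 0 := by
  have hrev (x : Fin 2) : f x ^ m ≠ f (Fin.rev x) ^ m := by
    fin_cases x
    exacts [hf, hf.symm]
  ext v
  have hv := congrFun h v
  simp only [opAt_diagonal, diagonal_pow, mulVec_diagonal, Pi.pow_apply, Function.comp_apply] at hv
  exact (mul_eq_mul_right_iff.mp hv).resolve_left (hrev (v j))

theorem stabGroup_opAt_diagonal_mulVec_ssubset (hψ : ψ ≠ 0) (hf : ∀ x, f x ≠ 0)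
    (hf4 : f 0 ^ 4 ≠ f 1 ^ 4) (hQ : Q ∈ stabGroup ψ)
    (hQZ : SemiconjBy Q (opAt j σZ) (-opAt j σZ)) :
    stabGroup (opAt j (diagonal f) *ᵥ ψ) ⊂ stabGroup ψ := by
  have hanti : ∀ P ∈ stabGroup (opAt j (diagonal f) *ᵥ ψ),
      ¬ SemiconjBy P (opAt j σZ) (-opAt j σZ) := fun P hP hPZ =>
    hψ (eq_zero_of_opAt_diagonal_pow_mulVec_eq hf4
      (opAt_diagonal_pow_four_mulVec_eq hP hQ hPZ hQZ))
  suffices hsub : stabGroup (opAt j (diagonal f) *ᵥ ψ) ⊆ stabGroup ψ from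
    (Set.ssubset_iff_of_subset hsub).mpr ⟨Q, hQ, fun h => hanti Q h hQZ⟩
  refine fun P hP => ⟨hP.1, ?_⟩
  have hPZ := (hP.1.commute_or_anticommute_opAt_σZ j).resolve_right (hanti P hP)
  apply opAt_diagonal_mulVec_injective (j := j) hf
  rw [mulVec_mulVec, ← (commute_opAt_diagonal hPZ f).eq, ← mulVec_mulVec, hP.2]

lemma IsStabState.ne_zero (hψ : IsStabState ψ) : ψ ≠ 0 := by
  rintro rfl
  simpa [nrmSq] using hψ.1

lemma IsStabState.finite_stabGroup (hψ : IsStabState ψ) : (stabGroup ψ).Finite :=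
  Set.finite_of_ncard_ne_zero (hψ.2.trans_ne (by positivity))

theorem T_gate_creates_magic_general (hψ : IsStabState ψ)
    (hex : ∃ P ∈ stabGroup ψ, P * opAt j σZ = -(opAt j σZ * P))
    (hf : ∀ x, f x ≠ 0) (hf4 : f 0 ^ 4 ≠ f 1 ^ 4) :
    ¬ IsStabState (opAt j (diagonal f) *ᵥ ψ) := by
  obtain ⟨Q, hQ, hQZ⟩ := hex
  rintro ⟨-, hcard⟩
  have hsemiconj : SemiconjBy Q (opAt j σZ) (-opAt j σZ) := hQZ.trans (neg_mul _ _).symm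
  have hssub := stabGroup_opAt_diagonal_mulVec_ssubset hψ.ne_zero hf hf4 hQ hsemiconj
  exact (Set.ncard_lt_ncard hssub hψ.finite_stabGroup).ne (hcard.trans hψ.2.symm)

end DiagonalGate

lemma Tgate_eq_diagonal : Tgate = diagonal ![1, Complex.exp (Real.pi * Complex.I / 4)] := by
  ext x y
  fin_cases x <;> fin_cases y <;> simp [Tgate]

lemma exp_pi_mul_I_div_four_pow_four : Complex.exp (Real.pi * Complex.I / 4) ^ 4 = -1 := by
  rw [← Complex.exp_nat_mul, ← Complex.exp_pi_mul_I]
  push_cast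
  ring_nf

/-- **A `T` gate on a qubit where the stabilizer group acts nontrivially produces
magic** (App. B 1): if the stabilizer group of the stabilizer state `ψ` contains
an element anticommuting with `Z_1`, then `T_1 ψ` is not a stabilizer state. -/
theorem T_gate_creates_magic {n : ℕ} [NeZero n]
    (ψ : QVec n) (hψ : IsStabState ψ)
    (hex : ∃ P ∈ stabGroup ψ,
      P * opAt (0 : Fin n) σZ = -(opAt (0 : Fin n) σZ * P)) :
    ¬ IsStabState ((opAt (0 : Fin n) Tgate).mulVec ψ) := by
  rw [Tgate_eq_diagonal]
  refine T_gate_creates_magic_general hψ hex (by simp [Fin.forall_fin_two]) ?_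
  simp [exp_pi_mul_I_div_four_pow_four, self_eq_neg]

end PaperFormal
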